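/- Let S be a skew lattice and let b, x, y, z, w ∈ S satisfy b∧x∧b = b∧y∧b and b∧z∧b = b∧w∧b. Then b∧(x∧z)∧b = b∧(y∧w)∧b. -/

import Mathlib

/-!
A band is regular, `axaya = axya`, as soon as Green's relation `R` is a right congruence and `L` is
a left congruence: `ax R axa` gives `axya R axaya`, dually `ya L aya` gives `axya L axaya`, and
`R ∩ L` is equality. In a regular band `x ↦ bxb` preserves products, so its kernel is a congruence.

The operation `∧` of a skew lattice satisfies this criterion. The point is that if `x R y` and
`b ∧ x = b`, then `n = x ∨ b` is `L`-related to `x` and satisfies `n ∧ b = b`. Since `y R x L n`,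
we get `y ∧ n = x`, hence `x ∧ b = y ∧ n ∧ b = y ∧ b`.
-/

section Band

variable {α : Type*} (m : α → α → α)

local infixl:70 " ⬝ " => m

/-- A band, i.e. an idempotent semigroup. It is unbundled, as a property of the operation, so that
the opposite band is simply `flip m`. -/
structure IsBand : Prop where
  assoc (x y z : α) : x ⬝ y ⬝ z = x ⬝ (y ⬝ z)
  idem (x : α) : x ⬝ x = x

/-- A regular band: a band satisfying the identity `axaya = axya`. -/
structure IsRegularBand : Prop extends IsBand m where
  regular (a x y : α) : a ⬝ x ⬝ a ⬝ y ⬝ a = a ⬝ x ⬝ y ⬝ a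

/-- Green's relation `R`, in the form it takes in a band: `x` and `y` generate the same principal
right ideal exactly when each is a left identity for the other. -/
def GreenR (x y : α) : Prop := x ⬝ y = y ∧ y ⬝ x = x

/-- Green's relation `L` of a band, encoded as the relation `R` of the opposite band. -/
def GreenL (x y : α) : Prop := GreenR (flip m) x y

variable {m} {n x y : α}

theorem GreenR.symm (h : GreenR m x y) : GreenR m y x := And.symm h

theorem GreenR.eq_of_greenL (hR : GreenR m x y) (hL : GreenL m x y) : x = y :=
  hL.2.symm.trans hR.1

namespace IsBand

theorem flip (hm : IsBand m) : IsBand (flip m) where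
  assoc x y z := (hm.assoc z y x).symm
  idem := hm.idem

theorem mul_eq_of_greenR_of_greenL (hm : IsBand m) (hR : GreenR m x y) (hL : GreenL m x n) :
    y ⬝ n = x := by
  obtain ⟨hxy, hyx⟩ := hR
  obtain ⟨hnx, hxn⟩ : n ⬝ x = n ∧ x ⬝ n = x := hL
  calc y ⬝ n = x ⬝ y ⬝ (n ⬝ x) := by rw [hxy, hnx]
    _ = x ⬝ n ⬝ y ⬝ (n ⬝ (y ⬝ x)) := by rw [hxn, hyx]
    _ = x ⬝ ((n ⬝ y) ⬝ (n ⬝ y)) ⬝ x := by simp only [hm.assoc]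
    _ = x ⬝ n ⬝ (y ⬝ x) := by rw [hm.idem]; simp only [hm.assoc]
    _ = x := by rw [hxn, hyx, hm.idem]

theorem greenR_mul_mul_self (hm : IsBand m) (a x : α) : GreenR m (a ⬝ x) (a ⬝ x ⬝ a) := by
  constructor
  · rw [← hm.assoc, hm.idem]
  · calc a ⬝ x ⬝ a ⬝ (a ⬝ x) = a ⬝ x ⬝ ((a ⬝ a) ⬝ x) := by simp only [hm.assoc]
      _ = a ⬝ x := by rw [hm.idem a, hm.idem]

theorem greenR_sandwich (hm : IsBand m)
    (hR : ∀ x y c, GreenR m x y → GreenR m (x ⬝ c) (y ⬝ c)) (a x y : α) :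
    GreenR m (a ⬝ x ⬝ y ⬝ a) (a ⬝ x ⬝ a ⬝ y ⬝ a) :=
  hR _ _ a (hR _ _ y (hm.greenR_mul_mul_self a x))

theorem isRegularBand (hm : IsBand m)
    (hR : ∀ x y c, GreenR m x y → GreenR m (x ⬝ c) (y ⬝ c))
    (hL : ∀ x y c, GreenL m x y → GreenL m (c ⬝ x) (c ⬝ y)) : IsRegularBand m where
  toIsBand := hm
  regular a x y := by
    have hl : GreenL m (a ⬝ (x ⬝ (y ⬝ a))) (a ⬝ (x ⬝ (a ⬝ (y ⬝ a)))) :=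
      hm.flip.greenR_sandwich hL a y x
    simp only [← hm.assoc] at hl
    exact ((hm.greenR_sandwich hR a x y).eq_of_greenL hl).symm

end IsBand

namespace IsRegularBand

theorem sandwich_mul (hm : IsRegularBand m) (b x y : α) :
    b ⬝ (x ⬝ y) ⬝ b = (b ⬝ x ⬝ b) ⬝ (b ⬝ y ⬝ b) :=
  calc b ⬝ (x ⬝ y) ⬝ b = b ⬝ x ⬝ b ⬝ y ⬝ b := by rw [hm.regular]; simp only [hm.assoc]
    _ = b ⬝ x ⬝ (b ⬝ b) ⬝ y ⬝ b := by rw [hm.idem]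
    _ = (b ⬝ x ⬝ b) ⬝ (b ⬝ y ⬝ b) := by simp only [hm.assoc]

theorem sandwich_mul_congr (hm : IsRegularBand m) {b x y z w : α}
    (hxy : b ⬝ x ⬝ b = b ⬝ y ⬝ b) (hzw : b ⬝ z ⬝ b = b ⬝ w ⬝ b) :
    b ⬝ (x ⬝ z) ⬝ b = b ⬝ (y ⬝ w) ⬝ b := by
  rw [hm.sandwich_mul, hm.sandwich_mul, hxy, hzw]

end IsRegularBand

end Band

section SkewLattice

variable {α : Type*} (wedge vee : α → α → α)

local infixl:70 " ⋏ " => wedge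
local infixl:65 " ⋎ " => vee

/-- A skew lattice: two band operations, written `⋏` and `⋎`, linked by the four absorption laws.
It is unbundled, as a property of the operations, so that reversing both of them is `flip`. -/
structure IsSkewLattice : Prop where
  isBand_wedge : IsBand wedge
  isBand_vee : IsBand vee
  wedge_vee_cancel_left (x y : α) : x ⋏ (x ⋎ y) = x
  vee_wedge_cancel_right (x y : α) : (y ⋎ x) ⋏ x = x
  vee_wedge_cancel_left (x y : α) : x ⋎ (x ⋏ y) = x
  wedge_vee_cancel_right (x y : α) : (y ⋏ x) ⋎ x = x

namespace IsSkewLattice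

variable {wedge vee} {b x y : α}

theorem flip (h : IsSkewLattice wedge vee) : IsSkewLattice (flip wedge) (flip vee) where
  isBand_wedge := h.isBand_wedge.flip
  isBand_vee := h.isBand_vee.flip
  wedge_vee_cancel_left := h.vee_wedge_cancel_right
  vee_wedge_cancel_right := h.wedge_vee_cancel_left
  vee_wedge_cancel_left := h.wedge_vee_cancel_right
  wedge_vee_cancel_right := h.vee_wedge_cancel_left

theorem wedge_eq_left_iff_vee_eq_right (h : IsSkewLattice wedge vee) :
    x ⋏ y = x ↔ x ⋎ y = y where
  mp hxy := by simpa only [hxy] using h.wedge_vee_cancel_right y x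
  mpr hxy := by simpa only [hxy] using h.wedge_vee_cancel_left x y

theorem greenL_vee_of_wedge_eq_left (h : IsSkewLattice wedge vee) (hb : b ⋏ x = b) :
    GreenL wedge x (x ⋎ b) := by
  have hvee : x ⋎ b ⋎ x = x := by
    rw [h.isBand_vee.assoc, h.wedge_eq_left_iff_vee_eq_right.1 hb, h.isBand_vee.idem]
  exact ⟨h.wedge_eq_left_iff_vee_eq_right.2 hvee, h.wedge_vee_cancel_left x b⟩

theorem wedge_eq_wedge_of_greenR (h : IsSkewLattice wedge vee) (hxy : GreenR wedge x y)
    (hb : b ⋏ x = b) : x ⋏ b = y ⋏ b := by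
  have hx : y ⋏ (x ⋎ b) = x :=
    h.isBand_wedge.mul_eq_of_greenR_of_greenL hxy (h.greenL_vee_of_wedge_eq_left hb)
  calc x ⋏ b = y ⋏ (x ⋎ b) ⋏ b := by rw [hx]
    _ = y ⋏ b := by rw [h.isBand_wedge.assoc, h.vee_wedge_cancel_right]

theorem wedge_wedge_wedge_of_greenR (h : IsSkewLattice wedge vee) (hxy : GreenR wedge x y)
    (c : α) : (y ⋏ c) ⋏ (x ⋏ c) = x ⋏ c := by
  have hw := h.isBand_wedge
  have hcx : x ⋏ (c ⋏ x) = y ⋏ (c ⋏ x) :=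
    h.wedge_eq_wedge_of_greenR hxy (by rw [hw.assoc, hw.idem])
  calc (y ⋏ c) ⋏ (x ⋏ c) = y ⋏ (c ⋏ x) ⋏ c := by simp only [hw.assoc]
    _ = (x ⋏ c) ⋏ (x ⋏ c) := by rw [← hcx]; simp only [hw.assoc]
    _ = x ⋏ c := hw.idem _

theorem greenR_wedge_right (h : IsSkewLattice wedge vee) (hxy : GreenR wedge x y) (c : α) :
    GreenR wedge (x ⋏ c) (y ⋏ c) :=
  ⟨h.wedge_wedge_wedge_of_greenR hxy.symm c, h.wedge_wedge_wedge_of_greenR hxy c⟩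

theorem greenL_wedge_left (h : IsSkewLattice wedge vee) (hxy : GreenL wedge x y) (c : α) :
    GreenL wedge (c ⋏ x) (c ⋏ y) :=
  h.flip.greenR_wedge_right hxy c

theorem isRegularBand_wedge (h : IsSkewLattice wedge vee) : IsRegularBand wedge :=
  h.isBand_wedge.isRegularBand (fun _ _ c hxy => h.greenR_wedge_right hxy c)
    (fun _ _ c hxy => h.greenL_wedge_left hxy c)

end IsSkewLattice

end SkewLattice

/-- The coset equivalence is compatible with ∧. -/
theorem coset_equiv_wedge_congr {S : Type*} (wedge vee : S → S → S)
    (wedge_idem : ∀ x : S, wedge x x = x)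
    (vee_idem : ∀ x : S, vee x x = x)
    (wedge_assoc : ∀ x y z : S, wedge (wedge x y) z = wedge x (wedge y z))
    (vee_assoc : ∀ x y z : S, vee (vee x y) z = vee x (vee y z))
    (abs₁ : ∀ x y : S, wedge x (vee x y) = x)
    (abs₂ : ∀ x y : S, wedge (vee y x) x = x)
    (abs₃ : ∀ x y : S, vee x (wedge x y) = x)
    (abs₄ : ∀ x y : S, vee (wedge y x) x = x)
    (b x y z w : S)
    (hxy : wedge (wedge b x) b = wedge (wedge b y) b)
    (hzw : wedge (wedge b z) b = wedge (wedge b w) b) :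
    wedge (wedge b (wedge x z)) b = wedge (wedge b (wedge y w)) b := by
  have hS : IsSkewLattice wedge vee :=
    ⟨⟨wedge_assoc, wedge_idem⟩, ⟨vee_assoc, vee_idem⟩, abs₁, abs₂, abs₃, abs₄⟩
  exact hS.isRegularBand_wedge.sandwich_mul_congr hxy hzw
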